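/- arXiv:2504.09293 — 3 statements merged into one kernel-verified Lean document; each statement's English description precedes it below -/
import Mathlib

section
/- Let G be a group, B ≤ G a subgroup, and n ≥ 1 an integer. Consider the action of the group B^{n-1} × B^{n-1} × B on G^n × G^n given by ((b₁,…,b_{n-1}),(c₁,…,c_{n-1}),d)·((g₁,…,gₙ),(h₁,…,hₙ)) = ((g₁b₁⁻¹, b₁g₂b₂⁻¹, …, b_{n-2}g_{n-1}b_{n-1}⁻¹, b_{n-1}gₙd⁻¹), (h₁c₁⁻¹, c₁h₂c₂⁻¹, …, c_{n-2}h_{n-1}c_{n-1}⁻¹, c_{n-1}hₙd⁻¹)). Then the map ((g₁,…,gₙ),(h₁,…,hₙ)) ↦ (g₁,…,gₙ, hₙ⁻¹, h_{n-1}⁻¹, …, h₁⁻¹) induces a well-defined bijection from the orbit space of this action onto F̃_{2n} = G^{2n}/B^{2n-1}. (This is the underlying bijection of the Poisson isomorphism χ : (F̃_n × F̃_n)/B₊ → F̃_{2n} of Remark 2.2 of the paper.) -/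
/-!
The map `fold n` is a bijection `Gⁿ × Gⁿ ≃ G²ⁿ`, and it intertwines the two actions along a
bijection of the acting groups. Inverting the entries of the second factor and reversing their
order turns right multiplication by `d⁻¹` on `hₙ` into left multiplication by `d` on `hₙ⁻¹`, so
`d` becomes the parameter sitting between the positions of `gₙ` and `hₙ⁻¹`. Hence the element
`((b₁,…,b_{n-1}), (c₁,…,c_{n-1}), d)` acts as `(b₁,…,b_{n-1}, d, c_{n-1},…,c₁) ∈ B²ⁿ⁻¹`
(`fold_act` and `exists_join`), and the bijection of total spaces descends to orbit spaces.
-/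

/-- Extension of a tuple `b : Fin r → B` to a map `ℕ → G`, sending `j` to `b (j-1)`
when `1 ≤ j` and `j - 1 < r`, and to `1` otherwise. -/
def extB {G : Type*} [Group G] (B : Subgroup G) (r : ℕ) (b : Fin r → B) (j : ℕ) : G :=
  if h : 1 ≤ j ∧ j - 1 < r then (b ⟨j - 1, h.2⟩ : G) else 1

/-- The standard action of `B^{m-1}` on `G^m`:
`(b₁,…,b_{m-1})·(g₁,…,g_m) = (g₁b₁⁻¹, b₁g₂b₂⁻¹, …, b_{m-2}g_{m-1}b_{m-1}⁻¹, b_{m-1}g_m)`,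
whose orbit space is `F̃_m = G ×_B ⋯ ×_B G`. -/
def stdAct {G : Type*} [Group G] (B : Subgroup G) (m : ℕ) (b : Fin (m - 1) → B)
    (g : Fin m → G) : Fin m → G :=
  fun i => extB B (m - 1) b i * g i * (extB B (m - 1) b ((i : ℕ) + 1))⁻¹

/-- The action of `B^{n-1} × B` on `G^n`:
`((b₁,…,b_{n-1}),d)·(g₁,…,gₙ) = (g₁b₁⁻¹, b₁g₂b₂⁻¹, …, b_{n-2}g_{n-1}b_{n-1}⁻¹, b_{n-1}gₙd⁻¹)`. -/
def actD {G : Type*} [Group G] (B : Subgroup G) (n : ℕ) (b : Fin (n - 1) → B) (d : B)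
    (g : Fin n → G) : Fin n → G :=
  fun i => extB B (n - 1) b i * g i *
    (if (i : ℕ) + 1 = n then (d : G) else extB B (n - 1) b ((i : ℕ) + 1))⁻¹

/-- The map `((g₁,…,gₙ),(h₁,…,hₙ)) ↦ (g₁,…,gₙ, hₙ⁻¹, h_{n-1}⁻¹, …, h₁⁻¹)`. -/
def fold {G : Type*} [Group G] (n : ℕ) (p : (Fin n → G) × (Fin n → G)) : Fin (2 * n) → G :=
  fun i => if h : (i : ℕ) < n then p.1 ⟨i, h⟩
    else (p.2 ⟨2 * n - 1 - i, by have := i.isLt; omega⟩)⁻¹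

/-- `fold n` as a bijection. -/
def foldEquiv {G : Type*} [Group G] (n : ℕ) :
    ((Fin n → G) × (Fin n → G)) ≃ (Fin (2 * n) → G) where
  toFun := fold n
  invFun x := (fun i => x ⟨i, by omega⟩, fun i => (x ⟨2 * n - 1 - i, by omega⟩)⁻¹)
  left_inv := by
    rintro ⟨g, h⟩
    refine Prod.ext (funext fun i => ?_) (funext fun i => ?_)
    · simp [fold]
    · have h₁ : ¬ (2 * n - 1 - (i : ℕ) < n) := by omega
      have h₂ : 2 * n - 1 - (2 * n - 1 - (i : ℕ)) = i := by omega
      simp [fold, h₁, h₂]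
  right_inv := by
    intro x
    funext i
    by_cases hi : (i : ℕ) < n
    · simp [fold, hi]
    · have h₂ : 2 * n - 1 - (2 * n - 1 - (i : ℕ)) = i := by omega
      simp [fold, hi, h₂]

theorem extB_of_lt {G : Type*} [Group G] (B : Subgroup G) {r : ℕ} (b : Fin r → B) {j k : ℕ}
    (hk : k < r) (hj : j = k + 1) : extB B r b j = b ⟨k, hk⟩ := by
  subst hj
  simp [extB, hk]

theorem extB_zero {G : Type*} [Group G] (B : Subgroup G) {r : ℕ} (b : Fin r → B) :
    extB B r b 0 = 1 := by
  simp [extB]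

theorem extB_of_gt {G : Type*} [Group G] (B : Subgroup G) {r : ℕ} (b : Fin r → B) {j : ℕ}
    (hj : r < j) : extB B r b j = 1 := by
  rw [extB, dif_neg (by omega)]

/-- Equivariance of `fold`: the hypotheses say that `e = (b₁,…,b_{n-1}, d, c_{n-1},…,c₁)`. -/
theorem fold_act {G : Type*} [Group G] (B : Subgroup G) (n : ℕ) (hn : 1 ≤ n)
    (b c : Fin (n - 1) → B) (d : B) (e : Fin (2 * n - 1) → B)
    (hb : ∀ k : Fin (n - 1), e ⟨k, by omega⟩ = b k)
    (hc : ∀ k : Fin (n - 1), e ⟨2 * n - 2 - k, by omega⟩ = c k)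
    (hd : e ⟨n - 1, by omega⟩ = d) (p : (Fin n → G) × (Fin n → G)) :
    fold n (actD B n b d p.1, actD B n c d p.2) = stdAct B (2 * n) e (fold n p) := by
  have left : ∀ j < n, extB B (2 * n - 1) e j = extB B (n - 1) b j := by
    intro j hj
    rcases j with _ | k
    · simp only [extB_zero]
    · rw [extB_of_lt B e (k := k) (by omega) rfl, extB_of_lt B b (k := k) (by omega) rfl,
        ← hb]
  have mid : extB B (2 * n - 1) e n = d := by
    rw [extB_of_lt B e (k := n - 1) (by omega) (by omega), hd]
  have right : ∀ j < n, extB B (2 * n - 1) e (2 * n - j) = extB B (n - 1) c j := by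
    intro j hj
    rcases j with _ | k
    · rw [extB_zero, extB_of_gt B e (by omega)]
    · rw [extB_of_lt B e (k := 2 * n - 2 - k) (by omega) (by omega),
        extB_of_lt B c (k := k) (by omega) rfl, ← hc]
  funext i
  have hi2 := i.isLt
  by_cases hi : (i : ℕ) < n
  · simp only [fold, stdAct, actD, hi, dif_pos]
    rw [left i hi]
    by_cases hin : (i : ℕ) + 1 = n
    · rw [if_pos hin, hin, mid]
    · rw [if_neg hin, left _ (by omega)]
  · simp only [fold, stdAct, actD, hi, dif_neg, not_false_eq_true]
    -- Position `i ≥ n` carries `h_j⁻¹` with `j = 2 * n - 1 - i` counted from `0`.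
    have h₁ := right (2 * n - 1 - i) (by omega)
    rw [show 2 * n - (2 * n - 1 - (i : ℕ)) = i + 1 by omega] at h₁
    rw [h₁]
    by_cases hin : (i : ℕ) = n
    · have h₂ : extB B (2 * n - 1) e i = d := by rw [hin, mid]
      rw [if_pos (by omega), h₂]
      group
    · have h₂ := right (2 * n - 1 - i + 1) (by omega)
      rw [show 2 * n - (2 * n - 1 - (i : ℕ) + 1) = i by omega] at h₂
      rw [if_neg (by omega), h₂]
      group

/-- The concatenation `(b₁,…,b_{n-1}, d, c_{n-1},…,c₁)`. -/
theorem exists_join {α : Type*} (n : ℕ) (hn : 1 ≤ n) (b c : Fin (n - 1) → α) (d : α) :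
    ∃ e : Fin (2 * n - 1) → α,
      (∀ k : Fin (n - 1), e ⟨k, by omega⟩ = b k) ∧
      (∀ k : Fin (n - 1), e ⟨2 * n - 2 - k, by omega⟩ = c k) ∧
      e ⟨n - 1, by omega⟩ = d := by
  refine ⟨fun i => if h : (i : ℕ) < n - 1 then b ⟨i, h⟩
    else if h' : (i : ℕ) = n - 1 then d else c ⟨2 * n - 2 - i, by omega⟩, ?_, ?_, ?_⟩
  · intro k
    simp
  · intro k
    have hk := k.isLt
    have h₁ : ¬ (2 * n - 2 - (k : ℕ) < n - 1) := by omega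
    have h₂ : ¬ (2 * n - 2 - (k : ℕ) = n - 1) := by omega
    have h₃ : 2 * n - 2 - (2 * n - 2 - (k : ℕ)) = k := by omega
    simp [h₁, h₂, h₃]
  · simp

/-- The map `((g₁,…,gₙ),(h₁,…,hₙ)) ↦ (g₁,…,gₙ,hₙ⁻¹,…,h₁⁻¹)` induces a
bijection from the orbit space of the `B^{n-1} × B^{n-1} × B`-action on `G^n × G^n` onto
`F̃_{2n} = G^{2n}/B^{2n-1}` (the bijection underlying `χ : (F̃_n × F̃_n)/B₊ → F̃_{2n}`). -/
theorem statement1 {G : Type*} [Group G] (B : Subgroup G) (n : ℕ) (hn : 1 ≤ n) :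
    ∃ Φ : Quot (fun p q : (Fin n → G) × (Fin n → G) =>
            ∃ (b c : Fin (n - 1) → B) (d : B),
              (actD B n b d p.1, actD B n c d p.2) = q) →
          Quot (fun g h : Fin (2 * n) → G =>
            ∃ b : Fin (2 * n - 1) → B, stdAct B (2 * n) b g = h),
      Function.Bijective Φ ∧
      ∀ p : (Fin n → G) × (Fin n → G), Φ (Quot.mk _ p) = Quot.mk _ (fold n p) := by
  refine ⟨Quot.congr (foldEquiv n) fun p q => ⟨?_, ?_⟩, Equiv.bijective _, fun p => rfl⟩
  · rintro ⟨b, c, d, rfl⟩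
    obtain ⟨e, hb, hc, hd⟩ := exists_join n hn b c d
    exact ⟨e, (fold_act B n hn b c d e hb hc hd p).symm⟩
  · rintro ⟨e, he⟩
    refine ⟨fun k => e ⟨k, by omega⟩, fun k => e ⟨2 * n - 2 - k, by omega⟩,
      e ⟨n - 1, by omega⟩, (foldEquiv n).injective ?_⟩
    rw [← he]
    exact fold_act B n hn _ _ _ e (fun _ => rfl) (fun _ => rfl) rfl p
end

section
/- Let G be a group, B₊ and B₋ subgroups of G, T an abelian group, π₊ : B₊ → T and π₋ : B₋ → T group homomorphisms, N₊ a normal subgroup of B₊, and n ≥ 2. Let K = G^* × B̃₊^{n-1} × B₊ act on G^n by ((x,y),(zᵢ,zᵢ′)ᵢ,b)·(g₁,…,gₙ) = (x g₁ z₁⁻¹, z₁′ g₂ z₂⁻¹, …, z′_{n-2} g_{n-1} z_{n-1}⁻¹, z′_{n-1} gₙ b⁻¹), and let ι : B₊^n → K be the group homomorphism ι(c₁,…,cₙ) = ((1,1),(c₁,c₁),…,(c_{n-1},c_{n-1}),cₙ). Consider the action of B₊^n × B₊^n on K × G^n given by (b,c)·(k,g) = (ι(b)·k·ι(c)⁻¹,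 ι(c)·g). Then the map K × G^n → G^* × N₊^{n-1} × G^n sending (((x,y),(zᵢ,zᵢ′)ᵢ,b),(g₁,…,gₙ)) to ((x,y),(z₁⁻¹z₁′,…,z_{n-1}⁻¹z′_{n-1}),(g₁,…,gₙ)) induces a well-defined bijection from the orbit space of this B₊^n × B₊^n-action onto the orbit space of the B₊^n-action on G^* × N₊^{n-1} × G^n given by (c₁,…,cₙ)·((x,y),(m₁,…,m_{n-1}),(g₁,…,gₙ)) = ((x,y),(c₁m₁c₁⁻¹,…,c_{n-1}m_{n-1}c_{n-1}⁻¹),(g₁c₁⁻¹, c₁g₂c₂⁻¹, …, c_{n-1}gₙcₙ⁻¹)). (This is the set-level content of Proposition 4.1 of the paper: F̃*_{2n} is isomorphic to the associated bundle (G^* × N₊^{n-1}) ×_{B₊^n} G^n.) -/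
/-- The dual group `G^* = {(x,y) ∈ B₊ × B₋ : π₊(x)π₋(y) = 1}`, realized as the kernel of
the homomorphism `(x,y) ↦ π₊(x)π₋(y)` into the abelian group `T`. -/
def GStar {G : Type*} [Group G] (Bp Bm : Subgroup G) {T : Type*} [CommGroup T]
    (πp : ↥Bp →* T) (πm : ↥Bm →* T) : Subgroup (↥Bp × ↥Bm) :=
  MonoidHom.ker ((πp.comp (MonoidHom.fst ↥Bp ↥Bm)) * (πm.comp (MonoidHom.snd ↥Bp ↥Bm)))

/-- The group `B̃₊ = {(a,b) ∈ B₊ × B₊ : ab⁻¹ ∈ N₊}` for a normal subgroup `N₊ ⊴ B₊`. -/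
def BTil {G : Type*} [Group G] (Bp : Subgroup G) (N : Subgroup ↥Bp) [hN : N.Normal] :
    Subgroup (↥Bp × ↥Bp) where
  carrier := {p | p.1 * p.2⁻¹ ∈ N}
  one_mem' := by
    show (1 : ↥Bp × ↥Bp).1 * ((1 : ↥Bp × ↥Bp).2)⁻¹ ∈ N
    simpa using N.one_mem
  mul_mem' := by
    intro a b ha hb
    have ha' : a.1 * a.2⁻¹ ∈ N := ha
    have hb' : b.1 * b.2⁻¹ ∈ N := hb
    show (a * b).1 * ((a * b).2)⁻¹ ∈ N
    have key : (a * b).1 * ((a * b).2)⁻¹ =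
        a.1 * (b.1 * b.2⁻¹) * a.1⁻¹ * (a.1 * a.2⁻¹) := by
      simp only [Prod.fst_mul, Prod.snd_mul]
      group
    rw [key]
    exact N.mul_mem (hN.conj_mem _ hb' _) ha'
  inv_mem' := by
    intro a ha
    have ha' : a.1 * a.2⁻¹ ∈ N := ha
    show (a⁻¹).1 * ((a⁻¹).2)⁻¹ ∈ N
    have key : (a⁻¹).1 * ((a⁻¹).2)⁻¹ = a.1⁻¹ * (a.1 * a.2⁻¹)⁻¹ * (a.1⁻¹)⁻¹ := by
      simp only [Prod.fst_inv, Prod.snd_inv]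
      group
    rw [key]
    exact hN.conj_mem _ (N.inv_mem ha') _

theorem mem_BTil {G : Type*} [Group G] {Bp : Subgroup G} {N : Subgroup ↥Bp} [N.Normal]
    {p : ↥Bp × ↥Bp} : p ∈ BTil Bp N ↔ p.1 * p.2⁻¹ ∈ N := Iff.rfl

/-- The map `p : B̃₊ → N₊`, `(z, z′) ↦ z⁻¹ z′`. -/
def pMap {G : Type*} [Group G] (Bp : Subgroup G) (N : Subgroup ↥Bp) [hN : N.Normal]
    (z : BTil Bp N) : N :=
  ⟨((z : ↥Bp × ↥Bp)).1⁻¹ * ((z : ↥Bp × ↥Bp)).2, by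
    have hz : ((z : ↥Bp × ↥Bp)).1 * ((z : ↥Bp × ↥Bp)).2⁻¹ ∈ N := mem_BTil.mp z.2
    have key : ((z : ↥Bp × ↥Bp)).1⁻¹ * ((z : ↥Bp × ↥Bp)).2 =
        ((z : ↥Bp × ↥Bp)).1⁻¹ * (((z : ↥Bp × ↥Bp)).1 * ((z : ↥Bp × ↥Bp)).2⁻¹)⁻¹ *
          (((z : ↥Bp × ↥Bp)).1⁻¹)⁻¹ := by group
    rw [key]
    exact hN.conj_mem _ (N.inv_mem hz) _⟩

/-- The action of `K = G^* × B̃₊^{n-1} × B₊` on `G^n`: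
`((x,y),(zᵢ,zᵢ′)ᵢ,b)·(g₁,…,gₙ) = (x g₁ z₁⁻¹, z₁′ g₂ z₂⁻¹, …, z′_{n-2} g_{n-1} z_{n-1}⁻¹,
z′_{n-1} gₙ b⁻¹)`. -/
def actK {G : Type*} [Group G] (Bp Bm : Subgroup G) {T : Type*} [CommGroup T]
    (πp : ↥Bp →* T) (πm : ↥Bm →* T) (N : Subgroup ↥Bp) [N.Normal] (n : ℕ)
    (k : GStar Bp Bm πp πm × (Fin (n - 1) → BTil Bp N) × ↥Bp)
    (g : Fin n → G) : Fin n → G :=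
  fun i =>
    (if (i : ℕ) = 0 then (((k.1 : ↥Bp × ↥Bm)).1 : G)
     else if h : (i : ℕ) - 1 < n - 1 then
       (((k.2.1 ⟨(i : ℕ) - 1, h⟩ : ↥Bp × ↥Bp)).2 : G) else 1)
    * g i *
    (if (i : ℕ) + 1 = n then (k.2.2 : G)
     else if h : (i : ℕ) < n - 1 then
       (((k.2.1 ⟨(i : ℕ), h⟩ : ↥Bp × ↥Bp)).1 : G) else 1)⁻¹

/-- The group homomorphism `ι : B₊^n → K`,
`ι(c₁,…,cₙ) = ((1,1),(c₁,c₁),…,(c_{n-1},c_{n-1}),cₙ)`. -/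
def iota {G : Type*} [Group G] (Bp Bm : Subgroup G) {T : Type*} [CommGroup T]
    (πp : ↥Bp →* T) (πm : ↥Bm →* T) (N : Subgroup ↥Bp) [N.Normal] (n : ℕ) (hn : 0 < n)
    (c : Fin n → ↥Bp) :
    GStar Bp Bm πp πm × (Fin (n - 1) → BTil Bp N) × ↥Bp :=
  (1,
   fun i =>
     ⟨(c ⟨(i : ℕ), by have := i.isLt; omega⟩, c ⟨(i : ℕ), by have := i.isLt; omega⟩),
      mem_BTil.mpr (by simpa using N.one_mem)⟩,
   c ⟨n - 1, by omega⟩)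

/-- The action of `B₊^n` on `G^* × N₊^{n-1} × G^n`:
`(c₁,…,cₙ)·((x,y),(m₁,…,m_{n-1}),(g₁,…,gₙ)) =
  ((x,y),(c₁m₁c₁⁻¹,…,c_{n-1}m_{n-1}c_{n-1}⁻¹),(g₁c₁⁻¹, c₁g₂c₂⁻¹, …, c_{n-1}gₙcₙ⁻¹))`. -/
def actT {G : Type*} [Group G] (Bp Bm : Subgroup G) {T : Type*} [CommGroup T]
    (πp : ↥Bp →* T) (πm : ↥Bm →* T) (N : Subgroup ↥Bp) [hN : N.Normal] (n : ℕ)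
    (c : Fin n → ↥Bp)
    (p : GStar Bp Bm πp πm × (Fin (n - 1) → ↥N) × (Fin n → G)) :
    GStar Bp Bm πp πm × (Fin (n - 1) → ↥N) × (Fin n → G) :=
  (p.1,
   fun i =>
     ⟨c ⟨(i : ℕ), by have := i.isLt; omega⟩ * ↑(p.2.1 i) *
        (c ⟨(i : ℕ), by have := i.isLt; omega⟩)⁻¹,
      hN.conj_mem _ (p.2.1 i).2 _⟩,
   fun i => extB Bp n c i * p.2.2 i * ((c i : G))⁻¹)

section

variable {G : Type*} [Group G] {Bp Bm : Subgroup G} {T : Type*} [CommGroup T]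
  {πp : ↥Bp →* T} {πm : ↥Bm →* T} {N : Subgroup ↥Bp} [hN : N.Normal] {n : ℕ}

/-- Through `ι`, the group `B₊ⁿ` acts on `Gⁿ` by the gauge transformations of `actT`. -/
theorem actK_iota (hn : 0 < n) (c : Fin n → ↥Bp) (g : Fin n → G) :
    actK Bp Bm πp πm N n (iota Bp Bm πp πm N n hn c) g =
      fun i : Fin n => extB Bp n c i * g i * (c i : G)⁻¹ := by
  funext i
  obtain ⟨i, hi⟩ := i
  have hl : (if i = 0 then (1 : G)
      else if h : i - 1 < n - 1 then (c ⟨i - 1, by omega⟩ : G) else 1) = extB Bp n c i := by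
    unfold extB
    by_cases h0 : i = 0
    · simp [h0]
    · rw [if_neg h0, dif_pos (by omega), dif_pos (by omega)]
  have hr : (if i + 1 = n then (c ⟨n - 1, by omega⟩ : G)
      else if h : i < n - 1 then (c ⟨i, by omega⟩ : G) else 1) = c ⟨i, hi⟩ := by
    by_cases h0 : i + 1 = n
    · rw [if_pos h0]
      congr 3
      omega
    · rw [if_neg h0, dif_pos (by omega)]
  rw [← hl, ← hr]
  rfl

variable (Bp Bm πp πm N n) in
/-- The action of `B₊ⁿ × B₊ⁿ` on `K × Gⁿ`: `(b, c) · (k, g) = (ι(b) k ι(c)⁻¹, ι(c) · g)`. -/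
def act (hn : 0 < n) (b c : Fin n → ↥Bp)
    (p : (GStar Bp Bm πp πm × (Fin (n - 1) → BTil Bp N) × ↥Bp) × (Fin n → G)) :
    (GStar Bp Bm πp πm × (Fin (n - 1) → BTil Bp N) × ↥Bp) × (Fin n → G) :=
  (iota Bp Bm πp πm N n hn b * p.1 * (iota Bp Bm πp πm N n hn c)⁻¹,
    actK Bp Bm πp πm N n (iota Bp Bm πp πm N n hn c) p.2)

variable (Bp Bm πp πm N n) in
/-- The map `((γ, (zᵢ, zᵢ′)ᵢ, b), g) ↦ (γ, (zᵢ⁻¹zᵢ′)ᵢ, g)`. -/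
def orbitMap (p : (GStar Bp Bm πp πm × (Fin (n - 1) → BTil Bp N) × ↥Bp) × (Fin n → G)) :
    GStar Bp Bm πp πm × (Fin (n - 1) → ↥N) × (Fin n → G) :=
  (p.1.1, fun i => pMap Bp N (p.1.2.1 i), p.2)

variable (Bp Bm πp πm N n) in
/-- The map `(γ, m, g) ↦ ((γ, (1, mᵢ)ᵢ, 1), g)`. -/
def sectionMap (p : GStar Bp Bm πp πm × (Fin (n - 1) → ↥N) × (Fin n → G)) :
    (GStar Bp Bm πp πm × (Fin (n - 1) → BTil Bp N) × ↥Bp) × (Fin n → G) :=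
  ((p.1, fun i => ⟨(1, p.2.1 i), mem_BTil.mpr (by simp)⟩, 1), p.2.2)

theorem orbitMap_act (hn : 0 < n) (b c : Fin n → ↥Bp)
    (p : (GStar Bp Bm πp πm × (Fin (n - 1) → BTil Bp N) × ↥Bp) × (Fin n → G)) :
    orbitMap Bp Bm πp πm N n (act Bp Bm πp πm N n hn b c p) =
      actT Bp Bm πp πm N n c (orbitMap Bp Bm πp πm N n p) := by
  refine Prod.ext ?_ (Prod.ext ?_ ?_)
  · simp [orbitMap, act, actT, iota]
  · funext i
    apply Subtype.ext
    simp [orbitMap, act, actT, iota, pMap, mul_assoc]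
  · exact actK_iota hn c p.2

theorem orbitMap_sectionMap (p : GStar Bp Bm πp πm × (Fin (n - 1) → ↥N) × (Fin n → G)) :
    orbitMap Bp Bm πp πm N n (sectionMap Bp Bm πp πm N n p) = p := by
  refine Prod.ext rfl (Prod.ext ?_ rfl)
  funext i
  apply Subtype.ext
  simp [orbitMap, sectionMap, pMap]

theorem act_sectionMap (hn : 0 < n) (c : Fin n → ↥Bp)
    (p : GStar Bp Bm πp πm × (Fin (n - 1) → ↥N) × (Fin n → G)) :
    act Bp Bm πp πm N n hn c c (sectionMap Bp Bm πp πm N n p) =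
      sectionMap Bp Bm πp πm N n (actT Bp Bm πp πm N n c p) := by
  refine Prod.ext (Prod.ext ?_ (Prod.ext ?_ ?_)) ?_
  · simp [sectionMap, act, actT, iota]
  · funext i
    apply Subtype.ext
    simp [sectionMap, act, actT, iota]
  · simp [sectionMap, act, actT, iota]
  · exact actK_iota hn c p.2.2

theorem act_sectionMap_orbitMap (hn : 0 < n)
    (p : (GStar Bp Bm πp πm × (Fin (n - 1) → BTil Bp N) × ↥Bp) × (Fin n → G)) :
    act Bp Bm πp πm N n hn
      (fun i => if h : (i : ℕ) < n - 1 then (p.1.2.1 ⟨i, h⟩ : ↥Bp × ↥Bp).1 else p.1.2.2) 1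
      (sectionMap Bp Bm πp πm N n (orbitMap Bp Bm πp πm N n p)) = p := by
  refine Prod.ext (Prod.ext ?_ (Prod.ext ?_ ?_)) ?_
  · simp [sectionMap, act, orbitMap, iota]
  · funext i
    apply Subtype.ext
    simp [sectionMap, act, orbitMap, iota, pMap]
  · simp [sectionMap, act, orbitMap, iota]
  · refine (actK_iota hn 1 p.2).trans ?_
    funext i
    simp [extB]

end

/-- The map `(((x,y),(zᵢ,zᵢ′)ᵢ,b),(g₁,…,gₙ)) ↦
((x,y),(z₁⁻¹z₁′,…,z_{n-1}⁻¹z′_{n-1}),(g₁,…,gₙ))` induces a bijection from the orbit space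
of the `B₊^n × B₊^n`-action `(b,c)·(k,g) = (ι(b)·k·ι(c)⁻¹, ι(c)·g)` on `K × G^n` onto the
orbit space of the conjugation-and-gauge `B₊^n`-action on `G^* × N₊^{n-1} × G^n`;
i.e. `F̃*_{2n} ≅ (G^* × N₊^{n-1}) ×_{B₊^n} G^n`. -/
theorem statement5 {G : Type*} [Group G] (Bp Bm : Subgroup G) {T : Type*} [CommGroup T]
    (πp : ↥Bp →* T) (πm : ↥Bm →* T) (N : Subgroup ↥Bp) [N.Normal] (n : ℕ) (hn : 2 ≤ n) :
    ∃ Φ : Quot (fun p q :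
            (GStar Bp Bm πp πm × (Fin (n - 1) → BTil Bp N) × ↥Bp) × (Fin n → G) =>
            ∃ b c : Fin n → ↥Bp,
              (iota Bp Bm πp πm N n (by omega) b * p.1 *
                  (iota Bp Bm πp πm N n (by omega) c)⁻¹,
                actK Bp Bm πp πm N n (iota Bp Bm πp πm N n (by omega) c) p.2) = q) →
          Quot (fun p q : GStar Bp Bm πp πm × (Fin (n - 1) → ↥N) × (Fin n → G) =>
            ∃ c : Fin n → ↥Bp, actT Bp Bm πp πm N n c p = q),
      Function.Bijective Φ ∧
      ∀ p : (GStar Bp Bm πp πm × (Fin (n - 1) → BTil Bp N) × ↥Bp) × (Fin n → G),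
        Φ (Quot.mk _ p) =
          Quot.mk _ (p.1.1, fun i => pMap Bp N (p.1.2.1 i), p.2) := by
  have hn0 : 0 < n := by omega
  refine ⟨Quot.map (orbitMap Bp Bm πp πm N n) ?_, ?_, fun _ => rfl⟩
  · rintro p _ ⟨b, c, rfl⟩
    exact ⟨c, (orbitMap_act hn0 b c p).symm⟩
  · refine Function.bijective_iff_has_inverse.mpr
      ⟨Quot.map (sectionMap Bp Bm πp πm N n) ?_, ?_, ?_⟩
    · rintro p _ ⟨c, rfl⟩
      exact ⟨c, c, act_sectionMap hn0 c p⟩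
    · rintro ⟨p⟩
      exact Quot.sound ⟨_, 1, act_sectionMap_orbitMap hn0 p⟩
    · rintro ⟨p⟩
      exact congrArg (Quot.mk _) (orbitMap_sectionMap p)
end

section
/- For every natural number n and every invertible matrix M ∈ GL(n, ℂ), there exist an invertible matrix P ∈ GL(n, ℂ), a lower unitriangular matrix L (i.e. L i j = 0 for i < j and L i i = 1 for all i), an invertible diagonal matrix D, and an upper unitriangular matrix U (i.e. U i j = 0 for i > j and U i i = 1 for all i), all of size n × n over ℂ, such that P⁻¹ M P = L * D * U. (This is the fact, used in Step 3 of the proof of Theorem 3.3 of the paper, that the big Gauss cell N₋TN₊ covers the whole group under conjugation, instantiated for G = GL(n, ℂ) with its standard triangular Borel subgroups.) -/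
/-!
Over an algebraically closed field every endomorphism has a basis in which its matrix is lower
triangular: the transpose has an eigenvector, i.e. a nonzero functional `φ` with `φ ∘ f = μ φ`, so
the hyperplane `ker φ` is `f`-stable; a triangularizing basis of `ker φ`, preceded by any vector
outside `ker φ`, triangularizes `f`.

Hence `P⁻¹ M P = T` with `T` lower triangular for some `P`. As `T` is invertible its diagonal
entries are nonzero, and dividing column `j` by `T j j` gives `T = L D` with `D` the diagonal of
`T` and `L` lower unitriangular, so that `U = 1` does the job.
-/

open Matrix

theorem exists_basis_toMatrix_lower {K : Type*} [Field K] [IsAlgClosed K] (n : ℕ) :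
    ∀ (V : Type _) [AddCommGroup V] [Module K V] [FiniteDimensional K V]
      (_ : Module.finrank K V = n) (f : V →ₗ[K] V),
      ∃ b : Module.Basis (Fin n) K V, ∀ i j, i < j → LinearMap.toMatrix b b f i j = 0 := by
  induction n with
  | zero =>
    intro V _ _ _ hV f
    exact ⟨Module.finBasisOfFinrankEq K V hV, fun i => i.elim0⟩
  | succ n ih =>
    intro V _ _ _ hV f
    have : Nontrivial V := Module.nontrivial_of_finrank_pos (R := K) (by omega)
    obtain ⟨μ, hμ⟩ := Module.End.exists_eigenvalue (K := K) (V := Module.Dual K V) f.dualMap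
    obtain ⟨φ, hφ⟩ := hμ.exists_hasEigenvector
    have hφf : ∀ x, φ (f x) = μ * φ x := fun x => by
      simpa using LinearMap.congr_fun hφ.apply_eq_smul x
    have hstable : ∀ x ∈ LinearMap.ker φ, f x ∈ LinearMap.ker φ := fun x hx => by
      rw [LinearMap.mem_ker] at hx ⊢
      rw [hφf, hx, mul_zero]
    have hrank : Module.finrank K (LinearMap.ker φ) = n := by
      have := Module.Dual.finrank_ker_add_one_of_ne_zero hφ.2
      omega
    obtain ⟨b, hb⟩ := ih (LinearMap.ker φ) hrank (f.restrict hstable)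
    obtain ⟨y, hy⟩ : ∃ y, φ y = 1 := LinearMap.surjective hφ.2 1
    let c : Module.Basis (Fin (n + 1)) K V := Module.Basis.mkFinCons y b
      (fun a x hx h => by
        have := congrArg φ h
        simpa [hy, LinearMap.mem_ker.1 hx] using this)
      (fun z => ⟨-φ z, by simp [hy]⟩)
    have hc : ∀ j : Fin n, c j.succ = b j := fun j => by simp [c]
    have hrepr : ∀ x : LinearMap.ker φ,
        c.repr (x : V) = ∑ i, Finsupp.single (Fin.succ i) (b.repr x i) := fun x => by
      have hx : (x : V) = ∑ i, b.repr x i • c i.succ := by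
        conv_lhs => rw [← b.sum_repr x]
        simp only [hc, Submodule.coe_sum, Submodule.coe_smul]
      rw [hx, map_sum]
      simp only [map_smul, c.repr_self, Finsupp.smul_single, smul_eq_mul, mul_one]
    refine ⟨c, fun i j hij => ?_⟩
    obtain ⟨j, rfl⟩ := Fin.exists_succ_eq.2 (Fin.ne_zero_of_lt hij)
    have key : c.repr (f (c j.succ)) =
        ∑ k, Finsupp.single (Fin.succ k) (b.repr (f.restrict hstable (b j)) k) := by
      rw [← hrepr, hc, LinearMap.coe_restrict_apply]
    rw [LinearMap.toMatrix_apply, key, Finsupp.finsetSum_apply]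
    refine Finset.sum_eq_zero fun k _ => ?_
    rw [Finsupp.single_apply]
    split_ifs with h
    · subst h
      simpa [LinearMap.toMatrix_apply] using hb k j (by simpa using hij)
    · rfl

/-- Every invertible complex matrix is conjugate to an element of the
big Gauss cell: for every `M ∈ GL(n, ℂ)` there are `P ∈ GL(n, ℂ)`, a lower unitriangular
`L`, an invertible diagonal `D` and an upper unitriangular `U` with `P⁻¹ M P = L D U`. -/
theorem statement7 (n : ℕ) (M : GL (Fin n) ℂ) :
    ∃ (P : GL (Fin n) ℂ) (L D U : Matrix (Fin n) (Fin n) ℂ),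
      (∀ i j : Fin n, i < j → L i j = 0) ∧ (∀ i : Fin n, L i i = 1) ∧
      D.IsDiag ∧ IsUnit D ∧
      (∀ i j : Fin n, j < i → U i j = 0) ∧ (∀ i : Fin n, U i i = 1) ∧
      ((P⁻¹ : GL (Fin n) ℂ) : Matrix (Fin n) (Fin n) ℂ) * (M : Matrix (Fin n) (Fin n) ℂ) *
        (P : Matrix (Fin n) (Fin n) ℂ) = L * D * U := by
  obtain ⟨b, hb⟩ := exists_basis_toMatrix_lower (K := ℂ) n (Fin n → ℂ) (by simp)
    (Matrix.toLin' (M : Matrix (Fin n) (Fin n) ℂ))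
  let e := Pi.basisFun ℂ (Fin n)
  let P : GL (Fin n) ℂ := ⟨e.toMatrix b, b.toMatrix e, e.toMatrix_mul_toMatrix_flip b,
    b.toMatrix_mul_toMatrix_flip e⟩
  have hP : ((P⁻¹ : GL (Fin n) ℂ) : Matrix (Fin n) (Fin n) ℂ) * (M : Matrix (Fin n) (Fin n) ℂ) *
      (P : Matrix (Fin n) (Fin n) ℂ) = LinearMap.toMatrix b b (Matrix.toLin' M.1) := by
    rw [← basis_toMatrix_mul_linearMap_toMatrix_mul_basis_toMatrix b e b e,
      LinearMap.toMatrix_eq_toMatrix', LinearMap.toMatrix'_toLin']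
    rfl
  set T := LinearMap.toMatrix b b (Matrix.toLin' M.1) with hT
  have hdet : T.det ≠ 0 := by
    have hu : IsUnit T := by
      rw [← hP]
      exact (P⁻¹ * M * P).isUnit
    exact ((Matrix.isUnit_iff_isUnit_det T).1 hu).ne_zero
  have hdiag : ∀ i, T i i ≠ 0 := by
    rw [Matrix.det_of_isLowerTriangular T fun i j hij => hb i j hij, Finset.prod_ne_zero_iff] at hdet
    exact fun i => hdet i (Finset.mem_univ i)
  refine ⟨P, Matrix.of fun i j => T i j / T j j, Matrix.diagonal fun i => T i i, 1,
    fun i j hij => by simp [hb i j hij], fun i => by simp [hdiag i], Matrix.isDiag_diagonal _, ?_,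
    fun i j hij => Matrix.one_apply_ne hij.ne', fun i => Matrix.one_apply_eq i, ?_⟩
  · rw [Matrix.isUnit_diagonal, Pi.isUnit_iff]
    exact fun i => (hdiag i).isUnit
  · rw [hP, mul_one]
    ext i j
    simp [Matrix.mul_diagonal, hdiag j]
end
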